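/- (Proposition 1, semiglobal practical form) For every r₀ > 0, δ > 0 and d > 0 there exist t̄ > 0 and γ* > 0 such that for every γ ∈ (0, γ*) and every x₀ with |x₀ − x*| ≤ r₀, every solution x : [0,∞) → ℝ of the extremum-seeking system ẋ(t) = −γ·h(x(t) + δ sin(2πt))·sin(2πt) with x(0) = x₀ is bounded and satisfies |x(t) − x*| ≤ δ + d for all t ≥ t̄/γ. -/

import Mathlib

open Real Filter

/-- Strict monotonicity to the right of the minimiser. -/
lemma es_mono_right (h : ℝ → ℝ) (hc : Continuous h) (xs : ℝ)
    (hmin : ∀ x : ℝ, x ≠ xs → h xs < h x)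
    (hinj : ∀ u v : ℝ, xs ≤ v → v < u → h u ≠ h v)
    (u v : ℝ) (hv : xs ≤ v) (huv : v ≤ u) : h v ≤ h u := by
  by_contra hlt
  push Not at hlt
  have hne : v ≠ u := by rintro rfl; exact lt_irrefl _ hlt
  have hvu : v < u := lt_of_le_of_ne huv hne
  have h1 : h xs ≤ h u := (hmin u (by linarith [hvu] : xs < u).ne').le
  obtain ⟨w, hw, hwu⟩ := intermediate_value_Icc hv hc.continuousOn ⟨h1, hlt.le⟩
  exact hinj u w hw.1 (lt_of_le_of_lt hw.2 hvu) hwu.symm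

/-- Pointwise lower bound of the averaged integrand, right side. -/
lemma es_pt_right (h : ℝ → ℝ) (xs : ℝ) (α : ℝ → ℝ)
    (hmono : ∀ u v : ℝ, xs ≤ v → v ≤ u → h v ≤ h u)
    (hlb : ∀ x₁ x₂ : ℝ, (x₁ - xs) * (x₂ - xs) ≥ 0 → α |x₂ - x₁| ≤ |h x₂ - h x₁|)
    (δ : ℝ) (hδ : 0 < δ) (y s : ℝ) (hy : xs + δ ≤ y) (hs : |s| ≤ 1) :
    α (δ * |s|) * |s| ≤ (h (y + δ * s) - h y) * s := by
  have hs' := abs_le.1 hs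
  have e1 : |y + δ * s - y| = δ * |s| := by
    rw [add_sub_cancel_left, abs_mul, abs_of_pos hδ]
  have b : xs ≤ y + δ * s := by nlinarith
  have b2 := hlb y (y + δ * s) (mul_nonneg (by linarith) (by linarith))
  rw [e1] at b2
  rcases le_total 0 s with h0 | h0
  · have := hmono (y + δ * s) y (by linarith) (by nlinarith)
    rw [abs_of_nonneg (by linarith : 0 ≤ h (y + δ * s) - h y)] at b2
    rw [abs_of_nonneg h0] at b2 ⊢
    exact mul_le_mul_of_nonneg_right b2 h0
  · have := hmono y (y + δ * s) b (by nlinarith)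
    rw [abs_of_nonpos (by linarith : h (y + δ * s) - h y ≤ 0)] at b2
    rw [abs_of_nonpos h0] at b2 ⊢
    nlinarith

/-- Confinement over one period. -/
lemma es_confine (h : ℝ → ℝ) (xs δ γ ρ H H0 : ℝ) (hδ : 0 < δ) (hγ : 0 < γ)
    (hH : ∀ u, |u - xs| ≤ ρ + 1 + δ → |h u| ≤ H0) (hHH : H0 < H) (hH0 : 0 ≤ H0) (hγH : γ * H ≤ 1)
    (x : ℝ → ℝ) (hx0 : |x 0 - xs| ≤ ρ)
    (hx : ∀ t : ℝ, 0 ≤ t → HasDerivAt x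
      (-γ * h (x t + δ * Real.sin (2 * Real.pi * t)) * Real.sin (2 * Real.pi * t)) t)
    (t : ℝ) (ht : t ∈ Set.Icc (0:ℝ) 1) : |x t - x 0| ≤ γ * H * t := by
  have key := image_norm_le_of_norm_deriv_right_lt_deriv_boundary
    (f := fun t => x t - x 0) (a := 0) (b := 1)
    (f' := fun t => -γ * h (x t + δ * Real.sin (2 * Real.pi * t)) * Real.sin (2 * Real.pi * t))
    (B := fun t => γ * H * t) (B' := fun _ => γ * H)
    (fun t ht => ((hx t ht.1).sub_const _).continuousAt.continuousWithinAt)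
    (fun t ht => ((hx t ht.1).sub_const _).hasDerivWithinAt) (by simp)
    (fun t => by simpa using (hasDerivAt_id t).const_mul (γ * H))
    ?_ ht
  · simpa using key
  · intro t ht he
    simp only [Real.norm_eq_abs] at he ⊢
    have hHp : 0 < H := by linarith
    have h1 : |x t - x 0| ≤ 1 := by
      rw [he]
      have : γ * H * t ≤ γ * H * 1 := mul_le_mul_of_nonneg_left ht.2.le (by positivity)
      linarith
    have hs := Real.abs_sin_le_one (2 * Real.pi * t)
    have h2 : |δ * Real.sin (2 * Real.pi * t)| ≤ δ := by
      rw [abs_mul, abs_of_pos hδ]; nlinarith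
    have h3 := hH (x t + δ * Real.sin (2 * Real.pi * t)) (by
      rw [abs_le] at *
      constructor <;> linarith [h1.1, h1.2, h2.1, h2.2, hx0.1, hx0.2])
    rw [abs_mul, abs_mul, abs_neg, abs_of_pos hγ]
    calc γ * |h (x t + δ * Real.sin (2 * Real.pi * t))| * |Real.sin (2 * Real.pi * t)|
        ≤ γ * H0 * 1 := by gcongr
      _ < γ * H := by rw [mul_one]; exact mul_lt_mul_of_pos_left hHH hγ

/-- The sine integrates to zero over the period. -/
lemma es_int_sin : ∫ t in (0:ℝ)..1, Real.sin (2 * Real.pi * t) = 0 := by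
  rw [intervalIntegral.integral_comp_mul_left (fun u => Real.sin u) (by positivity)]
  simp

/-- Averaging over one period. -/
lemma es_avg (h : ℝ → ℝ) (hc : Continuous h) (δ γ κ : ℝ) (hγ : 0 < γ)
    (x : ℝ → ℝ)
    (hx : ∀ t : ℝ, 0 ≤ t → HasDerivAt x
      (-γ * h (x t + δ * Real.sin (2 * Real.pi * t)) * Real.sin (2 * Real.pi * t)) t)
    (hκ : ∀ t ∈ Set.Icc (0:ℝ) 1, |h (x t + δ * Real.sin (2 * Real.pi * t))
      - h (x 0 + δ * Real.sin (2 * Real.pi * t))| ≤ κ) :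
    |x 1 - x 0 + γ * ∫ t in (0:ℝ)..1, (h (x 0 + δ * Real.sin (2 * Real.pi * t)) - h (x 0))
      * Real.sin (2 * Real.pi * t)| ≤ γ * κ := by
  have hxc : ContinuousOn x (Set.uIcc 0 1) := fun t ht => by
    rw [Set.uIcc_of_le zero_le_one] at ht
    exact (hx t ht.1).continuousAt.continuousWithinAt
  have hcd : ContinuousOn (fun t => -γ * h (x t + δ * Real.sin (2 * Real.pi * t))
      * Real.sin (2 * Real.pi * t)) (Set.uIcc 0 1) := by
    have : ContinuousOn (fun t => h (x t + δ * Real.sin (2 * Real.pi * t))) (Set.uIcc 0 1) :=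
      hc.comp_continuousOn (hxc.add (by fun_prop))
    exact (continuousOn_const.mul this).mul (by fun_prop)
  have i1 := intervalIntegral.integral_eq_sub_of_hasDerivAt (a := 0) (b := 1) (f := x)
    (fun t ht => by
      rw [Set.uIcc_of_le zero_le_one] at ht
      exact hx t ht.1) hcd.intervalIntegrable
  have hg : Continuous (fun t => (h (x 0 + δ * Real.sin (2 * Real.pi * t)) - h (x 0))
      * Real.sin (2 * Real.pi * t)) := by fun_prop
  have i3 : ∫ t in (0:ℝ)..1, γ * h (x 0) * Real.sin (2 * Real.pi * t) = 0 := by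
    rw [intervalIntegral.integral_const_mul, es_int_sin, mul_zero]
  have hsc : Continuous (fun t => γ * h (x 0) * Real.sin (2 * Real.pi * t)) := by fun_prop
  have e : x 1 - x 0 + γ * ∫ t in (0:ℝ)..1, (h (x 0 + δ * Real.sin (2 * Real.pi * t)) - h (x 0))
      * Real.sin (2 * Real.pi * t) = ∫ t in (0:ℝ)..1,
        ((-γ * h (x t + δ * Real.sin (2 * Real.pi * t)) * Real.sin (2 * Real.pi * t)
        + γ * ((h (x 0 + δ * Real.sin (2 * Real.pi * t)) - h (x 0)) * Real.sin (2 * Real.pi * t)))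
        + γ * h (x 0) * Real.sin (2 * Real.pi * t)) := by
    rw [intervalIntegral.integral_add (hcd.intervalIntegrable.add
        ((hg.const_mul γ).intervalIntegrable _ _)) (hsc.intervalIntegrable _ _),
      intervalIntegral.integral_add hcd.intervalIntegrable
        ((hg.const_mul γ).intervalIntegrable _ _), i1, i3,
      intervalIntegral.integral_const_mul, add_zero]
  rw [e]
  have := intervalIntegral.norm_integral_le_of_norm_le_const (a := 0) (b := 1) (C := γ * κ)
    (f := fun t => ((-γ * h (x t + δ * Real.sin (2 * Real.pi * t)) * Real.sin (2 * Real.pi * t)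
        + γ * ((h (x 0 + δ * Real.sin (2 * Real.pi * t)) - h (x 0)) * Real.sin (2 * Real.pi * t)))
        + γ * h (x 0) * Real.sin (2 * Real.pi * t))) ?_
  · simpa using this
  · intro t ht
    rw [Set.uIoc_of_le zero_le_one] at ht
    have hk := hκ t ⟨ht.1.le, ht.2⟩
    have hs := Real.abs_sin_le_one (2 * Real.pi * t)
    have e2 : (-γ * h (x t + δ * Real.sin (2 * Real.pi * t)) * Real.sin (2 * Real.pi * t)
        + γ * ((h (x 0 + δ * Real.sin (2 * Real.pi * t)) - h (x 0)) * Real.sin (2 * Real.pi * t)))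
        + γ * h (x 0) * Real.sin (2 * Real.pi * t)
        = -(γ * ((h (x t + δ * Real.sin (2 * Real.pi * t))
          - h (x 0 + δ * Real.sin (2 * Real.pi * t))) * Real.sin (2 * Real.pi * t))) := by ring
    rw [e2, Real.norm_eq_abs, abs_neg, abs_mul, abs_mul, abs_of_pos hγ]
    have hk0 : 0 ≤ κ := (abs_nonneg _).trans hk
    calc _ ≤ γ * (κ * 1) := by gcongr
      _ = γ * κ := by ring

/-- STATEMENT 15 (Proposition 1, semiglobal practical form) for the basic extremum-seeking
scheme `ẋ = -γ h(x + δ sin(2πt)) sin(2πt)`. -/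
theorem basic_es_semiglobal_practical (h : ℝ → ℝ) (hsmooth : ContDiff ℝ (⊤ : ℕ∞) h)
    (xstar : ℝ) (hmin : ∀ x : ℝ, x ≠ xstar → h xstar < h x)
    (α : ℝ → ℝ) (hα_cont : ContinuousOn α (Set.Ici 0))
    (hα_mono : StrictMonoOn α (Set.Ici 0)) (hα0 : α 0 = 0)
    (hα_top : Tendsto α atTop atTop)
    (hlb : ∀ x₁ x₂ : ℝ, (x₁ - xstar) * (x₂ - xstar) ≥ 0 → α |x₂ - x₁| ≤ |h x₂ - h x₁|)
    (r₀ δ d : ℝ) (hr₀ : 0 < r₀) (hδ : 0 < δ) (hd : 0 < d) :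
    ∃ tbar γstar : ℝ, 0 < tbar ∧ 0 < γstar ∧
      ∀ γ : ℝ, γ ∈ Set.Ioo 0 γstar →
        ∀ x₀ : ℝ, |x₀ - xstar| ≤ r₀ →
          ∀ x : ℝ → ℝ, Differentiable ℝ x → x 0 = x₀ →
            (∀ t : ℝ, 0 ≤ t →
              HasDerivAt x
                (-γ * h (x t + δ * Real.sin (2 * Real.pi * t)) * Real.sin (2 * Real.pi * t)) t) →
            (∃ M : ℝ, ∀ t : ℝ, 0 ≤ t → |x t| ≤ M) ∧
            (∀ t : ℝ, tbar / γ ≤ t → |x t - xstar| ≤ δ + d) := by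
  have hc : Continuous h := hsmooth.continuous
  have hαpos : ∀ s, 0 < s → 0 < α s := fun s hs => by
    have := hα_mono (Set.mem_Ici.2 le_rfl) (Set.mem_Ici.2 hs.le) hs
    rwa [hα0] at this
  have hαnn : ∀ s, 0 ≤ s → 0 ≤ α s := fun s hs => by
    rcases hs.eq_or_lt with rfl | hs
    · exact hα0.ge
    · exact (hαpos s hs).le
  -- monotonicity
  have hmr : ∀ u v : ℝ, xstar ≤ v → v ≤ u → h v ≤ h u :=
    es_mono_right h hc xstar hmin (fun u v hv huv he => by
      have h1 := hlb v u (mul_nonneg (by linarith) (by linarith))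
      rw [he, sub_self, abs_zero] at h1
      have := hαpos |u - v| (abs_pos.2 (by linarith [huv] : (0:ℝ) < u - v).ne')
      linarith)
  have hlb' : ∀ x₁ x₂ : ℝ, (x₁ - -xstar) * (x₂ - -xstar) ≥ 0 →
      α |x₂ - x₁| ≤ |h (-x₂) - h (-x₁)| := fun a b hab => by
    have := hlb (-a) (-b) (by nlinarith)
    rwa [show -b - -a = -(b - a) by ring, abs_neg] at this
  have hml : ∀ u v : ℝ, -xstar ≤ v → v ≤ u → h (-v) ≤ h (-u) :=
    es_mono_right (fun u => h (-u)) (by fun_prop) (-xstar)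
      (fun x hx => by
        simp only [neg_neg]
        exact hmin _ (fun hh => hx (by linarith)))
      (fun u v hv huv he => by
      have h1 := hlb' v u (mul_nonneg (by linarith) (by linarith))
      rw [he, sub_self, abs_zero] at h1
      have := hαpos |u - v| (abs_pos.2 (by linarith [huv] : (0:ℝ) < u - v).ne')
      linarith)
  have hgc : Continuous (fun t : ℝ => α (δ * |Real.sin (2 * Real.pi * t)|)
      * |Real.sin (2 * Real.pi * t)|) := by
    refine Continuous.mul ?_ (by fun_prop)
    exact hα_cont.comp_continuous (by fun_prop) (fun t => Set.mem_Ici.2 (by positivity))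
  obtain ⟨c, hcdef⟩ : ∃ c, c = ∫ t in (0:ℝ)..1, α (δ * |Real.sin (2 * Real.pi * t)|)
      * |Real.sin (2 * Real.pi * t)| := ⟨_, rfl⟩
  have hcpos : 0 < c := by
    rw [hcdef]
    refine intervalIntegral.integral_pos zero_lt_one hgc.continuousOn
      (fun t _ => mul_nonneg (hαnn _ (by positivity)) (abs_nonneg _)) ⟨1/4, by norm_num, ?_⟩
    have : Real.sin (2 * Real.pi * (1/4)) = 1 := by
      rw [show 2 * Real.pi * (1/4) = Real.pi / 2 by ring, Real.sin_pi_div_two]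
    rw [this, abs_one, mul_one, mul_one]
    exact hαpos δ hδ
  have hGr : ∀ y, xstar + δ ≤ y → c ≤ ∫ t in (0:ℝ)..1,
      (h (y + δ * Real.sin (2 * Real.pi * t)) - h y) * Real.sin (2 * Real.pi * t) := by
    intro y hy
    rw [hcdef]
    refine intervalIntegral.integral_mono_on zero_le_one (hgc.intervalIntegrable _ _)
      (Continuous.intervalIntegrable (by fun_prop) _ _) (fun t _ => ?_)
    exact es_pt_right h xstar α hmr hlb δ hδ y _ hy (Real.abs_sin_le_one _)
  have hGl : ∀ y, y ≤ xstar - δ → ∫ t in (0:ℝ)..1,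
      (h (y + δ * Real.sin (2 * Real.pi * t)) - h y) * Real.sin (2 * Real.pi * t) ≤ -c := by
    intro y hy
    rw [hcdef, ← intervalIntegral.integral_neg]
    refine intervalIntegral.integral_mono_on zero_le_one
      (Continuous.intervalIntegrable (by fun_prop) _ _) (hgc.neg.intervalIntegrable _ _)
      (fun t _ => ?_)
    have := es_pt_right (fun u => h (-u)) (-xstar) α hml hlb' δ hδ (-y)
      (-Real.sin (2 * Real.pi * t)) (by linarith) (by rw [abs_neg]; exact Real.abs_sin_le_one _)
    rw [abs_neg, neg_neg, show -(-y + δ * -Real.sin (2 * Real.pi * t))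
      = y + δ * Real.sin (2 * Real.pi * t) by ring] at this
    linarith
  -- constants
  obtain ⟨ρ, hρ⟩ : ∃ ρ, ρ = r₀ + δ + d := ⟨_, rfl⟩
  have hK : IsCompact (Set.Icc (xstar - (ρ + 1 + δ)) (xstar + (ρ + 1 + δ))) := isCompact_Icc
  obtain ⟨H0, hH0⟩ := hK.exists_bound_of_continuousOn hc.continuousOn
  have hmem : ∀ u, |u - xstar| ≤ ρ + 1 + δ →
      u ∈ Set.Icc (xstar - (ρ + 1 + δ)) (xstar + (ρ + 1 + δ)) := fun u hu => by
    rw [abs_le] at hu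
    constructor <;> linarith [hu.1, hu.2]
  have hH0' : ∀ u, |u - xstar| ≤ ρ + 1 + δ → |h u| ≤ H0 := fun u hu => hH0 u (hmem u hu)
  have hH0n : 0 ≤ H0 := (abs_nonneg _).trans (hH0' xstar (by
    rw [sub_self, abs_zero, hρ]; positivity))
  have huc := Metric.uniformContinuousOn_iff_le.1
    (hK.uniformContinuousOn_of_continuous hc.continuousOn) (c / 2) (by positivity)
  obtain ⟨η, hη, huc⟩ := huc
  obtain ⟨H, hH⟩ : ∃ H, H = H0 + 1 := ⟨_, rfl⟩
  have hHp : 0 < H := by linarith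
  obtain ⟨m, hm⟩ : ∃ m, m = min (min 1 η) (min δ (d / 2)) := ⟨_, rfl⟩
  have hmp : 0 < m := by rw [hm]; positivity
  have hm1 : m ≤ 1 := by rw [hm]; exact (min_le_left _ _).trans (min_le_left _ _)
  have hmη : m ≤ η := by rw [hm]; exact (min_le_left _ _).trans (min_le_right _ _)
  have hmδ : m ≤ δ := by rw [hm]; exact (min_le_right _ _).trans (min_le_left _ _)
  have hmd : m ≤ d / 2 := by rw [hm]; exact (min_le_right _ _).trans (min_le_right _ _)
  refine ⟨2 * r₀ / c + 1, min 1 (m / H), by positivity, by positivity, ?_⟩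
  rintro γ ⟨hγ, hγs⟩ x₀ hx₀ x - hx0 hx
  have hγ1 : γ < 1 := hγs.trans_le (min_le_left _ _)
  have hγH : γ * H ≤ m := by
    have := (hγs.trans_le (min_le_right _ _)).le
    rwa [le_div_iff₀ hHp] at this
  -- shifted solutions
  have hshift : ∀ n : ℕ, ∀ t : ℝ, 0 ≤ t → HasDerivAt (fun t => x (t + n))
      (-γ * h (x (t + n) + δ * Real.sin (2 * Real.pi * t)) * Real.sin (2 * Real.pi * t)) t := by
    intro n t ht
    have h1 := (hx (t + n) (by positivity)).comp_add_const t n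
    rwa [show 2 * Real.pi * (t + n) = 2 * Real.pi * t + n * (2 * Real.pi) by ring,
      Real.sin_add_nat_mul_two_pi] at h1
  have hconf : ∀ n : ℕ, |x n - xstar| ≤ ρ → ∀ t ∈ Set.Icc (0:ℝ) 1,
      |x (t + n) - x n| ≤ m := by
    intro n hn t ht
    have := es_confine h xstar δ γ ρ H H0 hδ hγ hH0' (by linarith) hH0n (by linarith)
      (fun t => x (t + n)) (by simpa using hn) (hshift n) t ht
    simp only [zero_add] at this
    have h2 : γ * H * t ≤ γ * H * 1 := mul_le_mul_of_nonneg_left ht.2 (by positivity)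
    linarith
  have hstep : ∀ n : ℕ, |x n - xstar| ≤ ρ →
      |x (n + 1 : ℕ) - xstar| ≤ max (|x n - xstar| - γ * c / 2) (δ + d / 2) := by
    intro n hn
    have h1 := hconf n hn 1 (by simp)
    have hav := es_avg h hc δ γ (c / 2) hγ (fun t => x (t + n)) (hshift n) (by
      intro t ht
      simp only [zero_add]
      have h2 := hconf n hn t ht
      have h3 : |δ * Real.sin (2 * Real.pi * t)| ≤ δ := by
        rw [abs_mul, abs_of_pos hδ]
        nlinarith [Real.abs_sin_le_one (2 * Real.pi * t)]
      have h4 := huc (x (t + n) + δ * Real.sin (2 * Real.pi * t)) (hmem _ (by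
          rw [abs_le] at *
          constructor <;> linarith [h2.1, h2.2, h3.1, h3.2, hn.1, hn.2]))
        (x n + δ * Real.sin (2 * Real.pi * t)) (hmem _ (by
          rw [abs_le] at *
          constructor <;> linarith [h2.1, h2.2, h3.1, h3.2, hn.1, hn.2]))
        (by
          rw [Real.dist_eq, add_sub_add_right_eq_sub]
          linarith)
      rwa [Real.dist_eq] at h4)
    simp only [zero_add] at hav
    have hcast : ((n + 1 : ℕ) : ℝ) = 1 + n := by push_cast; ring
    rw [hcast]
    have h1' := abs_le.1 h1
    have hav' := abs_le.1 hav
    rcases le_total (x n) (xstar - δ) with hl | hl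
    · have hG := mul_le_mul_of_nonneg_left (hGl (x n) hl) hγ.le
      refine le_max_of_le_left ?_
      rw [abs_of_nonpos (by linarith : x n - xstar ≤ 0), abs_of_nonpos (by linarith [h1'.2])]
      linarith [hav'.1]
    · rcases le_total (xstar + δ) (x n) with hr | hr
      · have hG := mul_le_mul_of_nonneg_left (hGr (x n) hr) hγ.le
        refine le_max_of_le_left ?_
        rw [abs_of_nonneg (by linarith : 0 ≤ x n - xstar), abs_of_nonneg (by linarith [h1'.1])]
        linarith [hav'.2]
      · refine le_max_of_le_right ?_
        rw [abs_le]
        constructor <;> linarith [h1'.1, h1'.2]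
  have hγc : 0 < γ * c := by positivity
  have hind : ∀ n : ℕ, |x n - xstar| ≤ max (r₀ - n * (γ * c / 2)) (δ + d / 2) := by
    intro n
    induction n with
    | zero =>
      refine le_max_of_le_left ?_
      simpa [hx0] using hx₀
    | succ n ih =>
      have hn0 : (0:ℝ) ≤ n * (γ * c / 2) := by positivity
      have hr : |x n - xstar| ≤ ρ := ih.trans (max_le (by linarith) (by linarith))
      refine (hstep n hr).trans (max_le ?_ (le_max_right _ _))
      push_cast
      rcases le_max_iff.1 ih with h1 | h1
      · refine le_max_of_le_left ?_
        linarith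
      · refine le_max_of_le_right ?_
        linarith
  have hindρ : ∀ n : ℕ, |x n - xstar| ≤ ρ := fun n => by
    have hn0 : (0:ℝ) ≤ n * (γ * c / 2) := by positivity
    exact (hind n).trans (max_le (by linarith) (by linarith))
  have hfl : ∀ t : ℝ, 0 ≤ t → |x t - x ⌊t⌋₊| ≤ d / 2 := by
    intro t ht
    have h1 := hconf ⌊t⌋₊ (hindρ _) (t - ⌊t⌋₊)
      ⟨by linarith [Nat.floor_le ht], by linarith [Nat.lt_floor_add_one t]⟩
    rw [sub_add_cancel] at h1
    linarith
  constructor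
  · refine ⟨|xstar| + ρ + d / 2, fun t ht => ?_⟩
    have h1 := hfl t ht
    have h2 := hindρ ⌊t⌋₊
    have h3 : x t = xstar + (x ⌊t⌋₊ - xstar) + (x t - x ⌊t⌋₊) := by ring
    rw [h3]
    exact (abs_add_three _ _ _).trans (by linarith)
  · intro t ht
    have ht' := (div_le_iff₀ hγ).1 ht
    have htp : 0 ≤ t := le_trans (by positivity) ht
    have h1 := hfl t htp
    have h2 : |x ⌊t⌋₊ - xstar| ≤ δ + d / 2 := by
      refine (hind ⌊t⌋₊).trans (max_le ?_ le_rfl)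
      have h3 := Nat.lt_floor_add_one t
      have h4 : 2 * r₀ / c ≤ ⌊t⌋₊ * γ := by nlinarith
      rw [div_le_iff₀ hcpos] at h4
      linarith
    have h3 := abs_sub_le (x t) (x ⌊t⌋₊) xstar
    linarith
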